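/- The map ψ_n : S_n → Y_n is a morphism of posets: if σ ≤ τ in the weak Bruhat order on S_n then ψ_n(σ) ≤ ψ_n(τ) in the weak order on Y_n. -/

import Mathlib

/-! Symmetric groups `Sₙ` are modelled as `Equiv.Perm (Fin n)` (with `0`-indexed letters, so
the letter `i ∈ {1, …, n}` of the paper corresponds to `i - 1 : Fin n`), with the group law
`σ · τ = σ * τ` given by composition: `(σ * τ) x = σ (τ x)`. -/

/-- `s` is a Coxeter generator `sᵢ`, i.e. the transposition of two consecutive letters. -/
def IsAdjacentTransposition {n : ℕ} (s : Equiv.Perm (Fin n)) : Prop :=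
  ∃ (i : ℕ) (h : i + 1 < n), s = Equiv.swap ⟨i, by omega⟩ ⟨i + 1, h⟩

/-- The length `l(σ)`: the least `k` such that `σ` is a product of `k` Coxeter
generators `sᵢ`. -/
noncomputable def permLength {n : ℕ} (σ : Equiv.Perm (Fin n)) : ℕ :=
  sInf {k | ∃ L : List (Equiv.Perm (Fin n)),
    L.length = k ∧ (∀ s ∈ L, IsAdjacentTransposition s) ∧ L.prod = σ}

/-- The weak Bruhat order on `Sₙ`: `ω ≤ σ` iff there is `τ` with `σ = τ · ω` and
`l(σ) = l(τ) + l(ω)`. -/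
def weakLe {n : ℕ} (ω σ : Equiv.Perm (Fin n)) : Prop :=
  ∃ τ : Equiv.Perm (Fin n), σ = τ * ω ∧ permLength σ = permLength τ + permLength ω

/-- The strict weak Bruhat order. -/
def weakLt {n : ℕ} (ω σ : Equiv.Perm (Fin n)) : Prop :=
  weakLe ω σ ∧ ω ≠ σ

/-- `σ × τ`: the image of `(σ, τ)` under the canonical embedding
`S_p × S_q ↪ S_{p+q}`, where `σ` permutes the first `p` letters and `τ` the last `q`. -/
def blockSum {p q : ℕ} (σ : Equiv.Perm (Fin p)) (τ : Equiv.Perm (Fin q)) :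
    Equiv.Perm (Fin (p + q)) :=
  finSumFinEquiv.symm.trans ((Equiv.sumCongr σ τ).trans finSumFinEquiv)

/-- `ξ` is a `(p,q)`-shuffle: `ξ(1) < … < ξ(p)` and `ξ(p+1) < … < ξ(p+q)`. -/
def IsShuffle (p q : ℕ) (ξ : Equiv.Perm (Fin (p + q))) : Prop :=
  (∀ i j : Fin (p + q), (i : ℕ) < (j : ℕ) → (j : ℕ) < p → ξ i < ξ j) ∧
  (∀ i j : Fin (p + q), p ≤ (i : ℕ) → (i : ℕ) < (j : ℕ) → ξ i < ξ j)

/-- `ξ_{p,q} ∈ S_{p+q}`: the permutation with one-line notation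
`(q+1, q+2, …, q+p, 1, 2, …, q)`. -/
def xi (p q : ℕ) : Equiv.Perm (Fin (p + q)) :=
  finSumFinEquiv.symm.trans ((Equiv.sumComm (Fin p) (Fin q)).trans
    (finSumFinEquiv.trans (finCongr (Nat.add_comm q p))))

/-- Transport of a permutation along an equality of the number of letters. -/
def permCast {m n : ℕ} (h : m = n) (π : Equiv.Perm (Fin m)) : Equiv.Perm (Fin n) :=
  (finCongr h).permCongr π

/-- The grafting `σ ∨ τ ∈ S_{p+q+1}` of `σ ∈ S_p` and `τ ∈ S_q`: in 1-indexed one-line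
notation, `(σ∨τ)(i) = σ(i)` for `1 ≤ i ≤ p`, `(σ∨τ)(p+1) = p+q+1`, and
`(σ∨τ)(i) = τ(i-p-1) + p` for `p+2 ≤ i ≤ p+q+1`.  (Equivalently,
`σ ∨ τ = (σ × τ × 1₁) · s_{p+q} · s_{p+q-1} · ⋯ · s_{p+1}`.) -/
def graft {p q : ℕ} (σ : Equiv.Perm (Fin p)) (τ : Equiv.Perm (Fin q)) :
    Equiv.Perm (Fin (p + q + 1)) :=
  blockSum (blockSum σ τ) (1 : Equiv.Perm (Fin 1)) *
    permCast (by omega) (blockSum (1 : Equiv.Perm (Fin p)) (finRotate (q + 1))⁻¹)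

/-- The `over` operation on permutations: `σ / τ := σ × τ`. -/
def overP {p q : ℕ} (σ : Equiv.Perm (Fin p)) (τ : Equiv.Perm (Fin q)) :
    Equiv.Perm (Fin (p + q)) :=
  blockSum σ τ

/-- The `under` operation on permutations: `σ \ τ := ξ_{p,q} · (σ × τ)`. -/
def underP {p q : ℕ} (σ : Equiv.Perm (Fin p)) (τ : Equiv.Perm (Fin q)) :
    Equiv.Perm (Fin (p + q)) :=
  xi p q * blockSum σ τ

/-- Planar binary trees: `leaf` is the tree `|` (no interior vertex) and
`node l r = l ∨ r` is the grafting of `l` and `r` (their roots are joined to a new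
vertex, which becomes the root). -/
inductive PBTree : Type
  | leaf : PBTree
  | node : PBTree → PBTree → PBTree
deriving DecidableEq

/-- The number of interior vertices of a planar binary tree: `t ∈ Yₙ` iff `t.size = n`. -/
def PBTree.size : PBTree → ℕ
  | .leaf => 0
  | .node l r => l.size + r.size + 1

/-- The weak order on planar binary trees, generated transitively by
(a) `u ≤ u' → v ≤ v' → u∨v ≤ u'∨v'` and (b) `(u∨v)∨w ≤ u∨(v∨w)`. -/
inductive TreeLe : PBTree → PBTree → Prop
  | refl (t : PBTree) : TreeLe t t
  | graft {u u' v v' : PBTree} : TreeLe u u' → TreeLe v v' →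
      TreeLe (.node u v) (.node u' v')
  | rotate (u v w : PBTree) : TreeLe (.node (.node u v) w) (.node u (.node v w))
  | trans {a b c : PBTree} : TreeLe a b → TreeLe b c → TreeLe a c

/-- The graph of the map `ψₙ : Sₙ → Yₙ`: `PsiRel σ t` holds iff `ψ(σ) = t`.
The map `ψ` sends `σ ∈ Sₙ` with `σ(i) = n` to `ψ(σˡ) ∨ ψ(σʳ)`, where
`σˡ ∈ S_{i-1}`, `σʳ ∈ S_{n-i}` are the order-preserving relabelings of the subwords of
the one-line notation of `σ` to the left and to the right of the letter `n`; equivalently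
(Proposition 1.8 of the paper), `σ = (γ × 1₁) · (σˡ ∨ σʳ)` for a (unique)
`(i-1, n-i)`-shuffle `γ`. -/
inductive PsiRel : {n : ℕ} → Equiv.Perm (Fin n) → PBTree → Prop
  | leaf (σ : Equiv.Perm (Fin 0)) : PsiRel σ .leaf
  | node {a b : ℕ} {γ : Equiv.Perm (Fin (a + b))} {σl : Equiv.Perm (Fin a)}
      {σr : Equiv.Perm (Fin b)} {tl tr : PBTree} :
      IsShuffle a b γ → PsiRel σl tl → PsiRel σr tr →
      PsiRel (blockSum γ (1 : Equiv.Perm (Fin 1)) * graft σl σr) (.node tl tr)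

theorem blockSum_castAdd {p q : ℕ} (σ : Equiv.Perm (Fin p)) (τ : Equiv.Perm (Fin q)) (x : Fin p) :
    blockSum σ τ (Fin.castAdd q x) = Fin.castAdd q (σ x) := by
  simp [blockSum]

theorem blockSum_natAdd {p q : ℕ} (σ : Equiv.Perm (Fin p)) (τ : Equiv.Perm (Fin q)) (x : Fin q) :
    blockSum σ τ (Fin.natAdd p x) = Fin.natAdd p (τ x) := by
  simp [blockSum]

theorem blockSum_val_lt {p q : ℕ} (σ : Equiv.Perm (Fin p)) (τ : Equiv.Perm (Fin q))
    (x : Fin (p + q)) (h : x.val < p) :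
    (blockSum σ τ x).val = (σ ⟨x.val, h⟩).val := by
  have : x = Fin.castAdd q ⟨x.val, h⟩ := by ext; simp
  conv_lhs => rw [this, blockSum_castAdd]
  simp

theorem blockSum_val_ge {p q : ℕ} (σ : Equiv.Perm (Fin p)) (τ : Equiv.Perm (Fin q))
    (x : Fin (p + q)) (h : p ≤ x.val) :
    (blockSum σ τ x).val = p + (τ ⟨x.val - p, by omega⟩).val := by
  have : x = Fin.natAdd p ⟨x.val - p, by omega⟩ := by ext; simp; omega
  conv_lhs => rw [this, blockSum_natAdd]
  simp

theorem permCast_val {m n : ℕ} (h : m = n) (π : Equiv.Perm (Fin m)) (x : Fin n) :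
    (permCast h π x).val = (π ⟨x.val, by omega⟩).val := by
  subst h; rfl

theorem rot_inv_zero (q : ℕ) : ((finRotate (q + 1))⁻¹ 0) = Fin.last q := by
  rw [Equiv.Perm.inv_eq_iff_eq]; simp

theorem rot_inv_succ (q : ℕ) (y : Fin q) : ((finRotate (q + 1))⁻¹ y.succ) = y.castSucc := by
  rw [Equiv.Perm.inv_eq_iff_eq]
  ext
  rw [coe_finRotate_of_ne_last]
  · simp
  · exact (Fin.castSucc_lt_last y).ne

theorem graft_lt {p q : ℕ} (σ : Equiv.Perm (Fin p)) (τ : Equiv.Perm (Fin q)) (x : Fin (p + q + 1))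
    (h : x.val < p) : (graft σ τ x).val = (σ ⟨x.val, h⟩).val := by
  have key : permCast (by omega) (blockSum (1 : Equiv.Perm (Fin p)) (finRotate (q + 1))⁻¹) x = x := by
    ext
    rw [permCast_val, blockSum_val_lt _ _ _ h]
    rfl
  unfold graft
  rw [Equiv.Perm.mul_apply, key, blockSum_val_lt _ _ _ (by omega), blockSum_val_lt _ _ _ h]

theorem graft_eq {p q : ℕ} (σ : Equiv.Perm (Fin p)) (τ : Equiv.Perm (Fin q)) (x : Fin (p + q + 1))
    (h : x.val = p) : (graft σ τ x).val = p + q := by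
  have key : (permCast (by omega) (blockSum (1 : Equiv.Perm (Fin p)) (finRotate (q + 1))⁻¹) x).val
      = p + q := by
    rw [permCast_val, blockSum_val_ge _ _ _ (by simp [h])]
    have : (⟨x.val - p, by omega⟩ : Fin (q + 1)) = 0 := by ext; simp [h]
    simp only [this, rot_inv_zero]; simp
  unfold graft
  rw [Equiv.Perm.mul_apply, blockSum_val_ge _ _ _ (by omega)]
  simp

theorem graft_gt {p q : ℕ} (σ : Equiv.Perm (Fin p)) (τ : Equiv.Perm (Fin q)) (x : Fin (p + q + 1))
    (h : p < x.val) : (graft σ τ x).val = p + (τ ⟨x.val - p - 1, by omega⟩).val := by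
  have key : (permCast (by omega) (blockSum (1 : Equiv.Perm (Fin p)) (finRotate (q + 1))⁻¹) x).val
      = x.val - 1 := by
    rw [permCast_val, blockSum_val_ge _ _ _ (by simp; omega)]
    have : (⟨x.val - p, by omega⟩ : Fin (q + 1)) = Fin.succ ⟨x.val - p - 1, by omega⟩ := by
      ext; simp; omega
    simp only [this, rot_inv_succ]; simp; omega
  unfold graft
  rw [Equiv.Perm.mul_apply, blockSum_val_lt _ _ _ (by omega), blockSum_val_ge _ _ _ (by simp [key]; omega)]
  simp only [key]
  congr 4
  omega

/-- decreasing binary tree of a function on an interval -/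
inductive IT : (ℕ → ℕ) → ℕ → ℕ → PBTree → Prop
  | leaf (f : ℕ → ℕ) (a : ℕ) : IT f a a .leaf
  | node {f : ℕ → ℕ} {a m b : ℕ} {s t : PBTree} : a ≤ m → m < b → IT f a m s → IT f (m + 1) b t →
      (∀ x, a ≤ x → x < b → x ≠ m → f x < f m) → IT f a b (.node s t)

theorem IT.le {f : ℕ → ℕ} {a b : ℕ} {t : PBTree} (h : IT f a b t) : a ≤ b := by
  cases h <;> omega

theorem IT.relabel {f : ℕ → ℕ} {a b : ℕ} {t : PBTree} (h : IT f a b t) :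
    ∀ (g : ℕ → ℕ) (c : ℕ), (∀ x y, a ≤ x → x < b → a ≤ y → y < b → f x < f y →
      g (x + c) < g (y + c)) → IT g (a + c) (b + c) t := by
  induction h with
  | leaf a => intro g c _; exact IT.leaf _ _
  | @node a m b s t h1 h2 hs ht hm ihs iht =>
    intro g c H
    refine IT.node (m := m + c) (by omega) (by omega) ?_ ?_ ?_
    · exact ihs g c (fun x y _ _ _ _ => H x y (by omega) (by omega) (by omega) (by omega))
    · have := iht g c (fun x y _ _ _ _ => H x y (by omega) (by omega) (by omega) (by omega))
      rwa [show m + 1 + c = m + c + 1 by omega] at this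
    · intro x hx1 hx2 hx3
      have := H (x - c) m (by omega) (by omega) h1 h2 (hm _ (by omega) (by omega) (by omega))
      rwa [show x - c + c = x by omega] at this

theorem IT.unique {f : ℕ → ℕ} {a b : ℕ} {t : PBTree} (h : IT f a b t) :
    ∀ {t'}, IT f a b t' → t = t' := by
  induction h with
  | leaf a =>
    intro t' h'
    cases h' with
    | leaf => rfl
    | node => omega
  | @node a m b s t h1 h2 hs ht hm ihs iht =>
    intro t' h'
    cases h' with
    | leaf => omega
    | @node _ m' _ s' t' h1' h2' hs' ht' hm' =>
      have : m = m' := by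
        by_contra hne
        have e1 := hm m' h1' h2' (Ne.symm hne)
        have e2 := hm' m h1 h2 hne
        omega
      subst this
      rw [ihs hs', iht ht']

theorem IT.uniq2 {f g : ℕ → ℕ} {a b : ℕ} {t t' : PBTree} (h : IT f a b t) (h' : IT g a b t')
    (H : ∀ x y, a ≤ x → x < b → a ≤ y → y < b → f x < f y → g x < g y) : t = t' := by
  have := h.relabel g 0 (by simpa using H)
  exact this.unique h'

theorem IT.exists (f : ℕ → ℕ) (k : ℕ) : ∀ a b : ℕ, b = a + k →
    (∀ x y, a ≤ x → x < b → a ≤ y → y < b → f x = f y → x = y) → ∃ t, IT f a b t := by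
  induction k using Nat.strong_induction_on with
  | _ k ih =>
    intro a b hb H
    rcases Nat.eq_zero_or_pos k with hk | hk
    · subst hk; subst hb; exact ⟨_, IT.leaf _ _⟩
    · obtain ⟨m, hm, hmax⟩ := Finset.exists_max_image (Finset.Ico a b) f ⟨a, by simp; omega⟩
      simp only [Finset.mem_Ico] at hm hmax
      obtain ⟨s, hs⟩ := ih (m - a) (by omega) a m (by omega)
        (fun x y _ _ _ _ => H x y (by omega) (by omega) (by omega) (by omega))
      obtain ⟨t, ht⟩ := ih (b - (m + 1)) (by omega) (m + 1) b (by omega)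
        (fun x y _ _ _ _ => H x y (by omega) (by omega) (by omega) (by omega))
      refine ⟨_, IT.node hm.1 hm.2 hs ht ?_⟩
      intro x h1 h2 h3
      have := hmax x ⟨h1, h2⟩
      have := H x m h1 h2 hm.1 hm.2
      omega

theorem IT.cover {f : ℕ → ℕ} {a b : ℕ} {t : PBTree} (h : IT f a b t) :
    ∀ (g : ℕ → ℕ) (p q : ℕ) (t' : PBTree), a ≤ p → p < q → q < b → f p < f q → g q < g p →
      (∀ x y, a ≤ x → x < b → a ≤ y → y < b → ¬ (x = p ∧ y = q) → f x < f y → g x < g y) →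
      IT g a b t' → TreeLe t t' := by
  induction h with
  | leaf a => intros; omega
  | @node a m b s t h1 h2 hs ht hm ihs iht =>
    intro g p q t' hap hpq hqb hf hg H h'
    cases h' with
    | leaf => omega
    | @node _ m' _ s' t' h1' h2' hs' ht' hm' =>
      by_cases hmm : m = m'
      · subst hmm
        by_cases hq : q < m
        · refine TreeLe.graft (ihs g p q s' hap hpq hq hf hg ?_ hs') ?_
          · exact fun x y _ _ _ _ => H x y (by omega) (by omega) (by omega) (by omega)
          · rw [ht.uniq2 ht' fun x y _ _ _ _ => H x y (by omega) (by omega) (by omega) (by omega) (by omega)]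
            exact TreeLe.refl _
        · have e1 : s = s' ∨ m < p := by
            by_cases hp : m < p
            · exact Or.inr hp
            · exact Or.inl (hs.uniq2 hs' fun x y _ _ _ _ =>
                H x y (by omega) (by omega) (by omega) (by omega) (by omega))
          by_cases hp : m < p
          · refine TreeLe.graft ?_ (iht g p q t' (by omega) hpq hqb hf hg ?_ ht')
            · rw [hs.uniq2 hs' fun x y _ _ _ _ => H x y (by omega) (by omega) (by omega) (by omega) (by omega)]
              exact TreeLe.refl _
            · exact fun x y _ _ _ _ => H x y (by omega) (by omega) (by omega) (by omega)
          · have hs1 := hs.uniq2 hs' fun x y _ _ _ _ =>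
                H x y (by omega) (by omega) (by omega) (by omega) (by omega)
            have ht1 := ht.uniq2 ht' fun x y _ _ _ _ =>
                H x y (by omega) (by omega) (by omega) (by omega) (by omega)
            rw [hs1, ht1]; exact TreeLe.refl _
      · have e1 := hm m' h1' h2' (Ne.symm hmm)
        have e2 := hm' m h1 h2 hmm
        have e3 : m' = p ∧ m = q := by
          by_contra hc
          have := H m' m h1' h2' h1 h2 hc e1
          omega
        obtain ⟨rfl, rfl⟩ := e3
        cases hs with
        | leaf => omega
        | @node _ k _ u v k1 k2 hu hv hk =>
          have hkm : k = m' := by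
            by_contra hc
            have c1 := hk m' h1' hpq (Ne.symm hc)
            have c2 := H m' k (by omega) (by omega) (by omega) (by omega) (by omega) c1
            have c3 := hm' k (by omega) (by omega) hc
            omega
          subst hkm
          cases ht' with
          | leaf => omega
          | @node _ j _ v' w' j1 j2 hv' hw' hj =>
            have hjm : j = m := by
              by_contra hc
              have c1 := hm j (by omega) (by omega) hc
              have c2 := H j m (by omega) (by omega) (by omega) (by omega) (by omega) c1
              have c3 := hj m (by omega) (by omega) (Ne.symm hc)
              omega
            subst hjm
            rw [hu.uniq2 hs' fun x y _ _ _ _ => H x y (by omega) (by omega) (by omega) (by omega) (by omega),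
              hv.uniq2 hv' fun x y _ _ _ _ => H x y (by omega) (by omega) (by omega) (by omega) (by omega),
              ht.uniq2 hw' fun x y _ _ _ _ => H x y (by omega) (by omega) (by omega) (by omega) (by omega)]
            exact TreeLe.rotate _ _ _

/-- one-line word of a permutation -/
def wordOf {n : ℕ} (σ : Equiv.Perm (Fin n)) (k : ℕ) : ℕ := if h : k < n then (σ ⟨k, h⟩).val else 0

theorem PsiRel.toIT {n : ℕ} {σ : Equiv.Perm (Fin n)} {t : PBTree} (h : PsiRel σ t) :
    IT (wordOf σ) 0 n t := by
  induction h with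
  | leaf σ => exact IT.leaf _ _
  | @node a b γ σl σr tl tr hγ hl hr ihl ihr =>
    have W1 : ∀ x (h : x < a), wordOf (blockSum γ (1 : Equiv.Perm (Fin 1)) * graft σl σr) x
        = (γ ⟨(σl ⟨x, h⟩).val, by omega⟩).val := by
      intro x h
      have e := graft_lt σl σr ⟨x, by omega⟩ h
      simp only [wordOf]
      rw [dif_pos (by omega), Equiv.Perm.mul_apply, blockSum_val_lt _ _ _ (by omega)]
      simp only [e]
    have W2 : wordOf (blockSum γ (1 : Equiv.Perm (Fin 1)) * graft σl σr) a = a + b := by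
      have e := graft_eq σl σr ⟨a, by omega⟩ rfl
      simp only [wordOf]
      rw [dif_pos (by omega), Equiv.Perm.mul_apply, blockSum_val_ge _ _ _ (by omega)]
      simp
    have W3 : ∀ x (h : x < b), wordOf (blockSum γ (1 : Equiv.Perm (Fin 1)) * graft σl σr) (x + (a + 1))
        = (γ ⟨a + (σr ⟨x, h⟩).val, by omega⟩).val := by
      intro x h
      have e := graft_gt σl σr ⟨x + (a + 1), by omega⟩ (by simp; omega)
      have e' : x + (a + 1) - a - 1 = x := by omega
      simp only [e'] at e
      simp only [wordOf]
      rw [dif_pos (by omega), Equiv.Perm.mul_apply, blockSum_val_lt _ _ _ (by omega)]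
      simp only [e]
    refine IT.node (m := a) (by omega) (by omega) ?_ ?_ ?_
    · refine ihl.relabel _ 0 ?_
      intro x y _ hx _ hy hxy
      simp only [wordOf, dif_pos hx, dif_pos hy] at hxy
      rw [Nat.add_zero x, Nat.add_zero y, W1 _ hx, W1 _ hy]
      exact hγ.1 _ _ hxy (by simp)
    · have := ihr.relabel (wordOf (blockSum γ (1 : Equiv.Perm (Fin 1)) * graft σl σr)) (a + 1) ?_
      · rwa [show 0 + (a + 1) = a + 1 by omega, show b + (a + 1) = a + b + 1 by omega] at this
      intro x y _ hx _ hy hxy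
      simp only [wordOf, dif_pos hx, dif_pos hy] at hxy
      rw [W3 _ hx, W3 _ hy]
      exact hγ.2 _ _ (by simp) (by simpa using hxy)
    · intro x _ hx hxa
      rw [W2]
      by_cases h : x < a
      · rw [W1 _ h]; omega
      · have := W3 (x - (a + 1)) (by omega)
        rw [show x - (a + 1) + (a + 1) = x by omega] at this
        rw [this]; omega

theorem IT.existsPerm {n : ℕ} (σ : Equiv.Perm (Fin n)) : ∃ t, IT (wordOf σ) 0 n t := by
  refine IT.exists _ n 0 n (by omega) ?_
  intro x y _ hx _ hy h
  simp only [wordOf, dif_pos hx, dif_pos hy] at h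
  simpa using σ.injective (Fin.ext h)

/-- inversions -/
def invSet {n : ℕ} (σ : Equiv.Perm (Fin n)) : Finset (Fin n × Fin n) :=
  Finset.univ.filter fun x => x.1 < x.2 ∧ σ x.2 < σ x.1

theorem mem_invSet {n : ℕ} (σ : Equiv.Perm (Fin n)) (x y : Fin n) :
    (x, y) ∈ invSet σ ↔ x < y ∧ σ y < σ x := by
  simp [invSet]

theorem swap_lt {n : ℕ} {i : ℕ} (h : i + 1 < n) (u v : Fin n)
    (h1 : ¬ (u.val = i ∧ v.val = i + 1)) (huv : u < v) :
    Equiv.swap (⟨i, by omega⟩ : Fin n) ⟨i + 1, h⟩ u < Equiv.swap (⟨i, by omega⟩ : Fin n) ⟨i + 1, h⟩ v := by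
  rw [Fin.lt_def] at *
  simp only [Equiv.swap_apply_def, Fin.ext_iff]
  split_ifs <;> simp_all <;> omega

theorem inv_up {n : ℕ} {i : ℕ} (h : i + 1 < n) (σ : Equiv.Perm (Fin n)) (p q : Fin n)
    (hp : (σ p).val = i) (hq : (σ q).val = i + 1) (hpq : p < q) :
    (invSet (Equiv.swap (⟨i, by omega⟩ : Fin n) ⟨i + 1, h⟩ * σ)).card = (invSet σ).card + 1 := by
  have hp' : σ p = ⟨i, by omega⟩ := Fin.ext hp
  have hq' : σ q = ⟨i + 1, h⟩ := Fin.ext hq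
  have : invSet (Equiv.swap (⟨i, by omega⟩ : Fin n) ⟨i + 1, h⟩ * σ) = insert (p, q) (invSet σ) := by
    ext ⟨x, y⟩
    rw [Finset.mem_insert, mem_invSet, mem_invSet, Prod.mk.injEq, Equiv.Perm.mul_apply,
      Equiv.Perm.mul_apply]
    constructor
    · rintro ⟨hxy, hlt⟩
      by_cases hc : x = p ∧ y = q
      · exact Or.inl hc
      refine Or.inr ⟨hxy, ?_⟩
      by_contra hn
      have hne : σ x ≠ σ y := fun e => hxy.ne (σ.injective e)
      have hl : σ x < σ y := lt_of_le_of_ne (not_lt.mp hn) hne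
      refine absurd (swap_lt h _ _ ?_ hl) (not_lt.mpr hlt.le)
      rintro ⟨a1, a2⟩
      exact hc ⟨σ.injective (Fin.ext (a1.trans hp.symm)), σ.injective (Fin.ext (a2.trans hq.symm))⟩
    · rintro (⟨rfl, rfl⟩ | ⟨hxy, hlt⟩)
      · refine ⟨hpq, ?_⟩
        rw [hp', hq']; simp
      · refine ⟨hxy, swap_lt h _ _ ?_ hlt⟩
        rintro ⟨a1, a2⟩
        have e1 : y = p := σ.injective (Fin.ext (a1.trans hp.symm))
        have e2 : x = q := σ.injective (Fin.ext (a2.trans hq.symm))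
        subst e1 e2
        exact absurd hxy (not_lt.mpr hpq.le)
  rw [this, Finset.card_insert_of_notMem]
  simp only [invSet, Finset.mem_filter, Finset.mem_univ, true_and, not_and, not_lt]
  intro _
  rw [hp', hq', Fin.le_def]; simp

theorem inv_down {n : ℕ} {i : ℕ} (h : i + 1 < n) (σ : Equiv.Perm (Fin n)) (p q : Fin n)
    (hp : (σ p).val = i) (hq : (σ q).val = i + 1) (hpq : q < p) :
    (invSet σ).card = (invSet (Equiv.swap (⟨i, by omega⟩ : Fin n) ⟨i + 1, h⟩ * σ)).card + 1 := by
  have hp' : σ p = ⟨i, by omega⟩ := Fin.ext hp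
  have hq' : σ q = ⟨i + 1, h⟩ := Fin.ext hq
  have := inv_up h (Equiv.swap (⟨i, by omega⟩ : Fin n) ⟨i + 1, h⟩ * σ) q p
    (by simp [hq']) (by simp [hp']) hpq
  rwa [← mul_assoc, Equiv.swap_mul_self, one_mul] at this

theorem inv_step {n : ℕ} (s σ : Equiv.Perm (Fin n)) (hs : IsAdjacentTransposition s) :
    (invSet (s * σ)).card ≤ (invSet σ).card + 1 := by
  obtain ⟨i, h, rfl⟩ := hs
  have hp : (σ (σ.symm ⟨i, by omega⟩)).val = i := by simp
  have hq : (σ (σ.symm ⟨i + 1, h⟩)).val = i + 1 := by simp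
  rcases lt_trichotomy (σ.symm ⟨i, by omega⟩) (σ.symm ⟨i + 1, h⟩) with hc | hc | hc
  · exact (inv_up h σ _ _ hp hq hc).le
  · rw [hc] at hp; omega
  · have := inv_down h σ _ _ hp hq hc
    omega

theorem inv_le_word {n : ℕ} (L : List (Equiv.Perm (Fin n))) (hL : ∀ s ∈ L, IsAdjacentTransposition s)
    (σ : Equiv.Perm (Fin n)) :
    (invSet (L.prod * σ)).card ≤ L.length + (invSet σ).card := by
  induction L with
  | nil => simp
  | cons s L ih =>
    have h1 := ih (fun x hx => hL x (by simp [hx]))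
    have h2 := inv_step s (L.prod * σ) (hL s (by simp))
    rw [List.prod_cons, mul_assoc, List.length_cons]
    omega

theorem inv_card_one (n : ℕ) : (invSet (1 : Equiv.Perm (Fin n))).card = 0 := by
  rw [Finset.card_eq_zero]
  refine Finset.eq_empty_of_forall_notMem ?_
  rintro ⟨x, y⟩ h
  rw [mem_invSet] at h
  exact absurd h.1 (not_lt.mpr h.2.le)

theorem exists_word {n : ℕ} (k : ℕ) : ∀ σ : Equiv.Perm (Fin n), (invSet σ).card = k →
    ∃ L : List (Equiv.Perm (Fin n)),
    L.length = k ∧ (∀ s ∈ L, IsAdjacentTransposition s) ∧ L.prod = σ := by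
  induction k using Nat.strong_induction_on with
  | _ k ih =>
    intro σ hσ
    by_cases hc : ∃ (i : ℕ) (h : i + 1 < n), σ.symm ⟨i + 1, h⟩ < σ.symm ⟨i, by omega⟩
    · obtain ⟨i, h, hlt⟩ := hc
      have := inv_down h σ _ _ (by simp) (by simp) hlt
      obtain ⟨L, h1, h2, h3⟩ := ih _ (by omega) (Equiv.swap (⟨i, by omega⟩ : Fin n) ⟨i + 1, h⟩ * σ) rfl
      refine ⟨Equiv.swap (⟨i, by omega⟩ : Fin n) ⟨i + 1, h⟩ :: L, ?_, ?_, ?_⟩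
      · rw [List.length_cons, h1]; omega
      · intro s hs
        rcases List.mem_cons.mp hs with rfl | hs
        · exact ⟨i, h, rfl⟩
        · exact h2 s hs
      · rw [List.prod_cons, h3, ← mul_assoc, Equiv.swap_mul_self, one_mul]
    · push Not at hc
      have h1 : σ = 1 := by
        have hmono : StrictMono σ.symm := by
          cases n with
          | zero => intro x; exact x.elim0
          | succ n =>
            rw [Fin.strictMono_iff_lt_succ]
            intro i
            refine lt_of_le_of_ne (hc i.val (by omega)) ?_
            intro e
            have := σ.symm.injective e
            exact absurd this (Fin.castSucc_lt_succ).ne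
        have e1 : σ.symm = Equiv.refl _ := by
          ext x
          have h2 := congrArg (fun f : Fin n ≃o Fin n => (f x).val)
            (Subsingleton.elim (hmono.orderIsoOfSurjective _ σ.symm.surjective) (OrderIso.refl _))
          simpa using h2
        rw [← Equiv.symm_symm σ, e1]; rfl
      subst h1
      rw [inv_card_one] at hσ
      subst hσ
      exact ⟨[], rfl, by simp, rfl⟩

theorem permLength_eq {n : ℕ} (σ : Equiv.Perm (Fin n)) : permLength σ = (invSet σ).card := by
  apply le_antisymm
  · exact Nat.sInf_le (exists_word _ σ rfl)
  · refine le_csInf ⟨_, exists_word _ σ rfl⟩ ?_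
    rintro k ⟨L, rfl, h2, rfl⟩
    have := inv_le_word L h2 1
    rw [inv_card_one] at this
    simpa using this

theorem step_le {n : ℕ} (s σ : Equiv.Perm (Fin n)) (hs : IsAdjacentTransposition s)
    (hc : (invSet (s * σ)).card = (invSet σ).card + 1) (t w : PBTree)
    (ht : IT (wordOf σ) 0 n t) (hw : IT (wordOf (s * σ)) 0 n w) : TreeLe t w := by
  obtain ⟨i, h, rfl⟩ := hs
  obtain ⟨p, hp⟩ := σ.surjective ⟨i, by omega⟩
  obtain ⟨q, hq⟩ := σ.surjective ⟨i + 1, h⟩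
  have hpq : p < q := by
    rcases lt_trichotomy p q with c | c | c
    · exact c
    · subst c; rw [hp] at hq; simp at hq
    · have := inv_down h σ p q (by simp [hp]) (by simp [hq]) c
      omega
  refine ht.cover _ p.val q.val w (by omega) hpq q.isLt ?_ ?_ ?_ hw
  · simp [wordOf, hp, hq]
  · simp [wordOf, hp, hq]
  · intro x y _ hx _ hy hne hlt
    simp only [wordOf, dif_pos hx, dif_pos hy] at hlt ⊢
    refine swap_lt h _ _ ?_ hlt
    rintro ⟨a1, a2⟩
    have e1 : ⟨x, hx⟩ = p := σ.injective (Fin.ext (by rw [a1, hp]))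
    have e2 : ⟨y, hy⟩ = q := σ.injective (Fin.ext (by rw [a2, hq]))
    exact hne ⟨congrArg Fin.val e1, congrArg Fin.val e2⟩

theorem word_le {n : ℕ} (σ : Equiv.Perm (Fin n)) (t : PBTree) (ht : IT (wordOf σ) 0 n t)
    (L : List (Equiv.Perm (Fin n))) : (∀ s ∈ L, IsAdjacentTransposition s) →
    (invSet (L.prod * σ)).card = L.length + (invSet σ).card →
    ∀ w, IT (wordOf (L.prod * σ)) 0 n w → TreeLe t w := by
  induction L with
  | nil =>
    intro _ _ w hw
    rw [List.prod_nil, one_mul] at hw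
    rw [ht.unique hw]; exact TreeLe.refl _
  | cons s L ih =>
    intro hL hc w hw
    have hL' : ∀ s ∈ L, IsAdjacentTransposition s := fun x hx => hL x (by simp [hx])
    have h1 := inv_le_word L hL' σ
    have h2 := inv_step s (L.prod * σ) (hL s (by simp))
    rw [List.prod_cons, mul_assoc] at hc hw
    rw [List.length_cons] at hc
    obtain ⟨u, hu⟩ := IT.existsPerm (L.prod * σ)
    exact TreeLe.trans (ih hL' (by omega) u hu)
      (step_le s _ (hL s (by simp)) (by omega) u w hu hw)

/-- Corollary 2.8: `ψₙ : Sₙ → Yₙ` is a morphism of posets: if `σ ≤ τ`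
in the weak Bruhat order on `Sₙ` then `ψₙ(σ) ≤ ψₙ(τ)` in the weak order on `Yₙ`. -/
theorem stmt13 (n : ℕ) (σ τ : Equiv.Perm (Fin n)) (hle : weakLe σ τ)
    (t w : PBTree) (ht : PsiRel σ t) (hw : PsiRel τ w) :
    TreeLe t w := by
  obtain ⟨ρ, rfl, hlen⟩ := hle
  rw [permLength_eq, permLength_eq, permLength_eq] at hlen
  obtain ⟨L, h1, h2, rfl⟩ := exists_word _ ρ rfl
  exact word_le σ t ht.toIT L h2 (by omega) w hw.toIT
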